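/- (Boundedness of multiplication by a Schwartz function on the refined scale) Let φ be a function of the class 𝓜, let s ∈ ℝ, n ≥ 1, and let χ be a Schwartz function on ℝⁿ. Then there exists a constant C > 0 such that for every Schwartz function u on ℝⁿ one has ∫_{ℝⁿ} ⟨ξ⟩^{2s} φ(⟨ξ⟩)² |𝓕(χ·u)(ξ)|² dξ ≤ C ∫_{ℝⁿ} ⟨ξ⟩^{2s} φ(⟨ξ⟩)² |𝓕u(ξ)|² dξ, where 𝓕 denotes the Fourier transform. Consequently multiplication by χ is a bounded operator on H^{s,φ}(ℝⁿ). -/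

import Mathlib

open MeasureTheory Filter Topology

/-- The class `𝓜` of Borel measurable functions `φ : [1,∞) → (0,∞)` such that `φ` and `1/φ`
are bounded on every interval `[1,b]`, `1 < b < ∞`, and `φ` is slowly varying at `+∞`
in Karamata's sense. (We model `φ` as a function on all of `ℝ`; only its values on
`[1,∞)` matter.) -/
def SlowlyVaryingM (φ : ℝ → ℝ) : Prop :=
  Measurable φ ∧
  (∀ t : ℝ, 1 ≤ t → 0 < φ t) ∧
  (∀ b : ℝ, 1 < b → ∃ C : ℝ, 0 < C ∧ ∀ t ∈ Set.Icc (1:ℝ) b, φ t ≤ C ∧ 1 / φ t ≤ C) ∧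
  (∀ lam : ℝ, 0 < lam → Tendsto (fun t : ℝ => φ (lam * t) / φ t) atTop (𝓝 1))


/-- The "Japanese bracket" `⟨ξ⟩ := (1 + |ξ|²)^{1/2}` of a point `ξ ∈ ℝⁿ`. -/
noncomputable def jbracket {n : ℕ} (ξ : EuclideanSpace ℝ (Fin n)) : ℝ :=
  Real.sqrt (1 + ‖ξ‖ ^ 2)

section helpers

open FourierTransform SchwartzMap Convolution

/-- Uniform boundedness of increments of an additively slowly varying measurable function. -/
lemma aux_uct (h : ℝ → ℝ) (hm : Measurable h)
    (hl : ∀ u : ℝ, Tendsto (fun x => h (x + u) - h x) atTop (𝓝 0)) :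
    ∃ X : ℝ, ∀ x ≥ X, ∀ v ∈ Set.Icc (0:ℝ) 1, |h (x + v) - h x| ≤ 1 := by
  let g : ℝ → ℝ → ℝ := fun x u => min 1 |h (x + u) - h x|
  have hgm : ∀ x, Measurable (g x) := by
    intro x; simp only [g]; fun_prop
  have hg1 : ∀ x u, ‖g x u‖ ≤ 1 := by
    intro x u
    rw [Real.norm_eq_abs, abs_of_nonneg (by positivity)]
    exact min_le_left _ _
  have hgi : ∀ x (S : Set ℝ), volume S ≠ ⊤ → IntegrableOn (g x) S := by
    intro x S hS
    exact Measure.integrableOn_of_bounded hS (hgm x).aestronglyMeasurable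
      (Eventually.of_forall (hg1 x))
  have h1 : Tendsto (fun x => ∫ u in Set.Icc (0:ℝ) 2, g x u) atTop
      (𝓝 (∫ u in Set.Icc (0:ℝ) 2, (0:ℝ))) := by
    apply tendsto_integral_filter_of_dominated_convergence (fun _ => (1:ℝ))
    · exact Eventually.of_forall fun x => (hgm x).aestronglyMeasurable
    · exact Eventually.of_forall fun x => Eventually.of_forall (hg1 x)
    · exact integrable_const _
    · refine Eventually.of_forall fun u => ?_
      have := (tendsto_const_nhds (x := (1:ℝ)) (f := (atTop : Filter ℝ))).min (hl u).abs
      simpa [g] using this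
  rw [integral_zero] at h1
  have h2 := h1.eventually (gt_mem_nhds (show (0:ℝ) < 1/4 by norm_num))
  obtain ⟨X, hX⟩ := eventually_atTop.1 h2
  refine ⟨X, fun x hx v hv => ?_⟩
  by_contra hcon
  push Not at hcon
  have e1 : ∫ y in Set.Icc (1:ℝ) 2, g x y ≤ 1/4 := by
    refine le_trans ?_ (hX x hx).le
    refine setIntegral_mono_set (hgi _ _ (by simp)) ?_ ?_
    · exact Eventually.of_forall fun u => by simp only [g]; positivity
    · exact (Set.Icc_subset_Icc (by norm_num) le_rfl).eventuallyLE
  have e2 : ∫ y in Set.Icc (1:ℝ) 2, g (x + v) (y - v) ≤ 1/4 := by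
    have : ∫ y in Set.Icc (1:ℝ) 2, g (x + v) (y - v)
        = ∫ y in Set.Icc (1 - v) (2 - v), g (x + v) y := by
      rw [integral_Icc_eq_integral_Ioc, integral_Icc_eq_integral_Ioc,
        ← intervalIntegral.integral_of_le (by norm_num),
        ← intervalIntegral.integral_of_le (by linarith),
        intervalIntegral.integral_comp_sub_right]
    rw [this]
    refine le_trans ?_ (hX (x + v) (by linarith [hv.1])).le
    refine setIntegral_mono_set (hgi _ _ (by simp)) ?_ ?_
    · exact Eventually.of_forall fun u => by simp only [g]; positivity
    · exact (Set.Icc_subset_Icc (by linarith [hv.2]) (by linarith [hv.1])).eventuallyLE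
  have i2 : IntegrableOn (fun y => g (x + v) (y - v)) (Set.Icc (1:ℝ) 2) := by
    refine Measure.integrableOn_of_bounded (M := 1) (by simp) ?_
      (Eventually.of_forall fun y => hg1 _ _)
    exact ((hgm (x+v)).comp (measurable_id.sub_const v)).aestronglyMeasurable
  have e3 : ∫ y in Set.Icc (1:ℝ) 2, (1:ℝ) ≤ ∫ y in Set.Icc (1:ℝ) 2, (g x y + g (x+v) (y-v)) := by
    refine integral_mono (integrable_const _) ((hgi x _ (by simp)).add i2) ?_
    intro y
    simp only [g]
    have : x + v + (y - v) = x + y := by ring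
    rw [this]
    have ht : |h (x+v) - h x| ≤ |h (x+y) - h x| + |h (x + y) - h (x+v)| := by
      have := abs_sub_le (h (x+v)) (h (x+y)) (h x)
      rw [abs_sub_comm (h (x+v)) (h (x+y))] at this
      linarith
    have p1 := abs_nonneg (h (x+y) - h x)
    have p2 := abs_nonneg (h (x+y) - h (x+v))
    rcases min_cases 1 |h (x+y) - h x| with ⟨q, _⟩ | ⟨q, _⟩ <;>
    rcases min_cases 1 |h (x+y) - h (x+v)| with ⟨r, _⟩ | ⟨r, _⟩ <;> rw [q, r] <;> linarith
  rw [integral_add (hgi x _ (by simp)) i2] at e3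
  norm_num at e3
  linarith

lemma aux_steps (h : ℝ → ℝ) (M : ℝ) (hM : 0 ≤ M)
    (hb : ∀ x ≥ 0, ∀ v ∈ Set.Icc (0:ℝ) 1, |h (x + v) - h x| ≤ M) :
    ∀ x ≥ 0, ∀ y ≥ 0, |h x - h y| ≤ M * (1 + |x - y|) := by
  have key : ∀ k : ℕ, ∀ x ≥ 0, ∀ d : ℝ, 0 ≤ d → d ≤ k + 1 → |h (x + d) - h x| ≤ M * (k + 1) := by
    intro k
    induction k with
    | zero =>
      intro x hx d hd hd1
      simpa using hb x hx d ⟨hd, by simpa using hd1⟩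
    | succ k ih =>
      intro x hx d hd hd1
      push_cast at hd1 ⊢
      by_cases h1 : d ≤ 1
      · have := hb x hx d ⟨hd, h1⟩
        have hk : (0:ℝ) ≤ k := Nat.cast_nonneg k
        nlinarith [mul_nonneg hM hk]
      · have a := ih (x + 1) (by linarith) (d - 1) (by linarith) (by linarith)
        have b := hb x hx 1 (by simp)
        rw [show x + 1 + (d - 1) = x + d by ring] at a
        have := abs_sub_le (h (x + d)) (h (x+1)) (h x)
        linarith
  have key2 : ∀ x ≥ 0, ∀ d ≥ 0, |h (x + d) - h x| ≤ M * (1 + d) := by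
    intro x hx d hd
    refine (key ⌊d⌋₊ x hx d hd (Nat.lt_floor_add_one d).le).trans ?_
    have := Nat.floor_le hd
    exact mul_le_mul_of_nonneg_left (by linarith) hM
  intro x hx y hy
  rcases le_total x y with hxy | hxy
  · have := key2 x hx (y - x) (by linarith)
    rw [show x + (y - x) = y by ring] at this
    rwa [abs_sub_comm, abs_sub_comm x, abs_of_nonneg (sub_nonneg.2 hxy)]
  · have := key2 y hy (x - y) (by linarith)
    rw [show y + (x - y) = x by ring] at this
    rwa [abs_of_nonneg (sub_nonneg.2 hxy)]

lemma aux_log (φ : ℝ → ℝ) (hφ : SlowlyVaryingM φ) :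
    ∃ M : ℝ, 0 ≤ M ∧ ∀ x ≥ 0, ∀ y ≥ 0,
      |Real.log (φ (Real.exp x)) - Real.log (φ (Real.exp y))| ≤ M * (1 + |x - y|) := by
  obtain ⟨hm, hpos, hbd, hsv⟩ := hφ
  set h : ℝ → ℝ := fun x => Real.log (φ (Real.exp x)) with hh
  have hpe : ∀ x ≥ 0, 0 < φ (Real.exp x) := fun x hx => hpos _ (Real.one_le_exp hx)
  have hhm : Measurable h := by
    simp only [hh]; fun_prop
  obtain ⟨X, hX⟩ := aux_uct h hhm (by
    intro u
    have h1 := ((hsv (Real.exp u) (Real.exp_pos u)).comp Real.tendsto_exp_atTop).log one_ne_zero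
    rw [Real.log_one] at h1
    refine h1.congr' ?_
    filter_upwards [eventually_ge_atTop 0, eventually_ge_atTop (-u)] with x hx hx2
    simp only [Function.comp, hh]
    rw [← Real.exp_add, add_comm u x, Real.log_div (hpe _ (by linarith)).ne' (hpe x hx).ne'])
  obtain ⟨C, hC, hCb⟩ := hbd (Real.exp (|X| + 1)) (Real.one_lt_exp_iff.2 (by positivity))
  have hlb : ∀ x ≥ 0, x ≤ |X| + 1 → |h x| ≤ |Real.log C| := by
    intro x hx hx1
    obtain ⟨a, b⟩ := hCb (Real.exp x) ⟨Real.one_le_exp hx, Real.exp_le_exp.2 hx1⟩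
    have p := hpe x hx
    have a' := Real.log_le_log p a
    have b' := Real.log_le_log (by positivity) b
    rw [one_div, Real.log_inv] at b'
    have := le_abs_self (Real.log C)
    rw [abs_le]
    constructor <;> simp only [hh] <;> linarith
  refine ⟨2 * |Real.log C| + 1, by positivity, aux_steps h _ (by positivity) ?_⟩
  intro x hx v hv
  by_cases hxX : X ≤ x
  · have := hX x hxX v hv
    have := abs_nonneg (Real.log C)
    linarith
  · have hxX : x ≤ |X| := (not_le.1 hxX).le.trans (le_abs_self X)
    have a := hlb x hx (by linarith)
    have b := hlb (x + v) (by linarith [hv.1]) (by linarith [hv.2])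
    have := abs_sub (h (x+v)) (h x)
    linarith

lemma one_le_jb {n : ℕ} (ξ : EuclideanSpace ℝ (Fin n)) : 1 ≤ jbracket ξ := by
  unfold jbracket
  rw [Real.one_le_sqrt]
  have := sq_nonneg ‖ξ‖
  linarith

lemma jb_le {n : ℕ} (ξ η : EuclideanSpace ℝ (Fin n)) :
    jbracket ξ ≤ (1 + ‖ξ - η‖) * jbracket η := by
  unfold jbracket
  rw [Real.sqrt_le_left (by positivity), mul_pow, Real.sq_sqrt (by positivity)]
  have h1 : ‖ξ‖ ≤ ‖η‖ + ‖ξ - η‖ := by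
    have := norm_add_le η (ξ - η)
    simpa using this
  have h2 : ‖ξ‖ ^ 2 ≤ (‖η‖ + ‖ξ - η‖) ^ 2 := by gcongr
  have := norm_nonneg η
  have hd := norm_nonneg (ξ - η)
  nlinarith [mul_nonneg hd (sq_nonneg (‖η‖ - 1)), mul_nonneg hd (sq_nonneg (‖η‖)),
    mul_nonneg hd hd, mul_nonneg (mul_nonneg hd hd) (sq_nonneg ‖η‖)]

lemma aux_peetre (φ : ℝ → ℝ) (hφ : SlowlyVaryingM φ) (s : ℝ) (n : ℕ) :
    ∃ C : ℝ, 0 < C ∧ ∃ N : ℕ, ∀ ξ η : EuclideanSpace ℝ (Fin n),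
      jbracket ξ ^ s * φ (jbracket ξ) ≤
        C * (1 + ‖ξ - η‖) ^ N * (jbracket η ^ s * φ (jbracket η)) := by
  obtain ⟨M, hM, hlog⟩ := aux_log φ hφ
  have hpos := hφ.2.1
  refine ⟨Real.exp M, Real.exp_pos _, ⌈|s| + M⌉₊, fun ξ η => ?_⟩
  have j1 := one_le_jb ξ
  have j2 := one_le_jb η
  have p1 : 0 < jbracket ξ := by linarith
  have p2 : 0 < jbracket η := by linarith
  set p := 1 + ‖ξ - η‖ with hp
  have hp1 : 1 ≤ p := by have := norm_nonneg (ξ - η); linarith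
  have hp0 : 0 < p := by linarith
  have l1 := Real.log_le_log p1 (jb_le ξ η)
  have l2 := Real.log_le_log p2 (jb_le η ξ)
  rw [norm_sub_rev] at l2
  rw [← hp] at l1 l2
  rw [Real.log_mul hp0.ne' (by positivity)] at l1 l2
  have l3 : |Real.log (jbracket ξ) - Real.log (jbracket η)| ≤ Real.log p := by
    rw [abs_le]; constructor <;> linarith
  have l4 := hlog _ (Real.log_nonneg j1) _ (Real.log_nonneg j2)
  rw [Real.exp_log p1, Real.exp_log p2] at l4
  have q1 := hpos _ j1
  have q2 := hpos _ j2
  have lp : 0 ≤ Real.log p := Real.log_nonneg hp1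
  rw [← Real.log_le_log_iff (by positivity) (by positivity),
    Real.log_mul (by positivity) (by positivity), Real.log_mul (by positivity) (by positivity),
    Real.log_mul (by positivity) (by positivity), Real.log_mul (by positivity) (by positivity),
    Real.log_rpow p1, Real.log_rpow p2, Real.log_exp, Real.log_pow]
  have c := Nat.le_ceil (|s| + M)
  have t1 : s * (Real.log (jbracket ξ) - Real.log (jbracket η)) ≤ |s| * Real.log p := by
    refine (le_abs_self _).trans ?_
    rw [abs_mul]
    gcongr
  have t2 : M * (1 + |Real.log (jbracket ξ) - Real.log (jbracket η)|) ≤ M * (1 + Real.log p) := by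
    gcongr
  have t3 := mul_le_mul_of_nonneg_right c lp
  have t4 := (le_abs_self _).trans l4
  nlinarith

lemma aux_conv {n : ℕ} (χ u : SchwartzMap (EuclideanSpace ℝ (Fin n)) ℂ)
    (ξ : EuclideanSpace ℝ (Fin n)) :
    𝓕 (fun x => χ x * u x) ξ = ∫ η, (𝓕 χ) (ξ - η) * (𝓕 u) η := by
  have h := convolution_apply (ContinuousLinearMap.mul ℂ ℂ) (𝓕 u) (𝓕 χ) ξ
  have h2 : ((𝓕 u : SchwartzMap (EuclideanSpace ℝ (Fin n)) ℂ) ⋆[ContinuousLinearMap.mul ℂ ℂ]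
     (𝓕 χ : SchwartzMap (EuclideanSpace ℝ (Fin n)) ℂ)) ξ = ∫ η, (𝓕 χ) (ξ - η) * (𝓕 u) η := by
    simp [MeasureTheory.convolution, mul_comm]
  rw [← h2, ← h]
  have inv : ∀ (f : SchwartzMap (EuclideanSpace ℝ (Fin n)) ℂ) x, (𝓕 (𝓕 f)) x = f (-x) := by
    intro f x
    have e : 𝓕⁻ (𝓕 f) = f := by simp
    conv_rhs => rw [← e]
    rw [fourierInv_coe, Real.fourierInv_eq_fourier_neg, neg_neg, fourier_coe]
  have e : SchwartzMap.convolution (ContinuousLinearMap.mul ℂ ℂ) (𝓕 u) (𝓕 χ)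
    = 𝓕⁻ (pairing (ContinuousLinearMap.mul ℂ ℂ) (𝓕 (𝓕 u)) (𝓕 (𝓕 χ))) := rfl
  rw [e, fourierInv_coe, Real.fourierInv_eq_fourier_comp_neg]
  have e2 : (fun x => χ x * u x) = fun x => (pairing (ContinuousLinearMap.mul ℂ ℂ)
      (𝓕 (𝓕 u)) (𝓕 (𝓕 χ)) : SchwartzMap (EuclideanSpace ℝ (Fin n)) ℂ) (-x) := by
    ext x
    simp [inv, mul_comm, pairing_apply_apply]
  rw [e2]

/-- Young's inequality `L¹ * L² → L²` for lower integrals. -/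
lemma aux_young {n : ℕ} (k f : EuclideanSpace ℝ (Fin n) → ENNReal)
    (hk : Measurable k) (hf : Measurable f) :
    ∫⁻ ξ, (∫⁻ η, k (ξ - η) * f η) ^ 2 ≤ (∫⁻ η, k η) ^ 2 * ∫⁻ η, f η ^ 2 := by
  have cs : ∀ ξ, (∫⁻ η, k (ξ - η) * f η) ^ 2 ≤ (∫⁻ η, k η) * ∫⁻ η, k (ξ - η) * f η ^ 2 := by
    intro ξ
    have hk' : Measurable fun η => k (ξ - η) := hk.comp (measurable_const.sub measurable_id)
    have := ENNReal.lintegral_mul_norm_pow_le (μ := volume) (f := fun η => k (ξ - η))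
      (g := fun η => k (ξ - η) * f η ^ 2) (p := 1/2) (q := 1/2) hk'.aemeasurable
      (hk'.mul (hf.pow_const 2)).aemeasurable (by norm_num) (by norm_num) (by norm_num)
    have e : ∀ η, k (ξ - η) ^ (1/2:ℝ) * (k (ξ - η) * f η ^ 2) ^ (1/2:ℝ) = k (ξ - η) * f η := by
      intro η
      rw [ENNReal.mul_rpow_of_nonneg _ _ (by norm_num), ← mul_assoc,
        ← ENNReal.rpow_add_of_nonneg _ _ (by norm_num) (by norm_num),
        ← ENNReal.rpow_natCast, ← ENNReal.rpow_mul]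
      norm_num
    simp only [e] at this
    rw [lintegral_sub_left_eq_self (fun η => k η) ξ] at this
    calc _ ≤ _ := pow_le_pow_left' this 2
      _ = _ := by
        rw [mul_pow, ← ENNReal.rpow_natCast, ← ENNReal.rpow_natCast, ← ENNReal.rpow_mul,
          ← ENNReal.rpow_mul]
        norm_num
  calc _ ≤ ∫⁻ ξ, (∫⁻ η, k η) * ∫⁻ η, k (ξ - η) * f η ^ 2 := lintegral_mono cs
    _ = (∫⁻ η, k η) * ∫⁻ ξ, ∫⁻ η, k (ξ - η) * f η ^ 2 := by
      rw [lintegral_const_mul]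
      apply Measurable.lintegral_prod_right'
        (f := fun p : _ × _ => k (p.1 - p.2) * f p.2 ^ 2)
      exact (hk.comp (measurable_fst.sub measurable_snd)).mul ((hf.comp measurable_snd).pow_const 2)
    _ = (∫⁻ η, k η) * ∫⁻ η, ∫⁻ ξ, k (ξ - η) * f η ^ 2 := by
      rw [lintegral_lintegral_swap]
      apply Measurable.aemeasurable
      exact (hk.comp (measurable_fst.sub measurable_snd)).mul ((hf.comp measurable_snd).pow_const 2)
    _ = (∫⁻ η, k η) * ∫⁻ η, (∫⁻ ξ, k ξ) * f η ^ 2 := by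
      congr 2
      ext η
      rw [lintegral_mul_const, lintegral_sub_right_eq_self (fun η => k η) η]
      exact hk.comp (measurable_id.sub_const η)
    _ = _ := by
      rw [lintegral_const_mul _ (hf.pow_const 2)]
      ring

end helpers

open FourierTransform SchwartzMap in
/-- Multiplication by a Schwartz function `χ` is bounded on the refined space
`H^{s,φ}(ℝⁿ)`: on the Fourier side, the weighted `L²` norm of `𝓕(χ·u)` is controlled by
that of `𝓕 u`, uniformly over Schwartz functions `u`. -/
theorem schwartz_multiplier_bounded_on_refined_scale
    (φ : ℝ → ℝ) (hφ : SlowlyVaryingM φ) (s : ℝ) (n : ℕ) (hn : 1 ≤ n)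
    (χ : SchwartzMap (EuclideanSpace ℝ (Fin n)) ℂ) :
    ∃ C : ℝ, 0 < C ∧ ∀ u : SchwartzMap (EuclideanSpace ℝ (Fin n)) ℂ,
      (∫⁻ ξ, ENNReal.ofReal (jbracket ξ ^ (2 * s) * φ (jbracket ξ) ^ 2 *
          ‖𝓕 (fun x => χ x * u x) ξ‖ ^ 2))
        ≤ ENNReal.ofReal C *
          ∫⁻ ξ, ENNReal.ofReal (jbracket ξ ^ (2 * s) * φ (jbracket ξ) ^ 2 *
            ‖𝓕 (fun x => u x) ξ‖ ^ 2) := by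
  obtain ⟨C, hC, N, hW⟩ := aux_peetre φ hφ s n
  set W : EuclideanSpace ℝ (Fin n) → ℝ := fun ξ => jbracket ξ ^ s * φ (jbracket ξ) with hWdef
  have hjm : Measurable (jbracket (n := n)) := by unfold jbracket; fun_prop
  have hWm : Measurable W := (hjm.pow_const s).mul (hφ.1.comp hjm)
  have hW0 : ∀ ξ, 0 ≤ W ξ := fun ξ =>
    mul_nonneg (Real.rpow_nonneg (by linarith [one_le_jb ξ]) _) (hφ.2.1 _ (one_le_jb ξ)).le
  have hsq : ∀ (ξ : EuclideanSpace ℝ (Fin n)) (z : ℂ),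
      ENNReal.ofReal (jbracket ξ ^ (2 * s) * φ (jbracket ξ) ^ 2 * ‖z‖ ^ 2)
        = (ENNReal.ofReal (W ξ) * ENNReal.ofReal ‖z‖) ^ 2 := by
    intro ξ z
    rw [← ENNReal.ofReal_mul (hW0 ξ), ← ENNReal.ofReal_pow (mul_nonneg (hW0 ξ) (norm_nonneg z))]
    congr 1
    simp only [hWdef]
    rw [mul_comm 2 s, Real.rpow_mul (by linarith [one_le_jb ξ])]
    norm_cast
    ring
  set X : SchwartzMap (EuclideanSpace ℝ (Fin n)) ℂ := 𝓕 χ with hX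
  set k : EuclideanSpace ℝ (Fin n) → ℝ := fun ξ => C * (1 + ‖ξ‖) ^ N * ‖X ξ‖ with hk
  have hk0 : ∀ ξ, 0 ≤ k ξ := fun ξ => by simp only [hk]; positivity
  have hkc : Continuous k := by
    have := X.continuous
    simp only [hk]; fun_prop
  have hki : Integrable k := by
    have i1 := ((X.integrable_pow_mul volume 0).add (X.integrable_pow_mul volume N)).const_mul
      (C * 2 ^ (N - 1))
    refine i1.mono' hkc.aestronglyMeasurable (Eventually.of_forall fun ξ => ?_)
    rw [Real.norm_of_nonneg (hk0 ξ)]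
    have := add_pow_le (zero_le_one' ℝ) (norm_nonneg ξ) N
    simp only [hk, Pi.add_apply, pow_zero, one_mul]
    rw [one_pow] at this
    calc C * (1 + ‖ξ‖) ^ N * ‖X ξ‖ ≤ C * (2 ^ (N - 1) * (1 + ‖ξ‖ ^ N)) * ‖X ξ‖ := by gcongr
      _ = _ := by ring
  set I : ENNReal := ∫⁻ ξ, ENNReal.ofReal (k ξ) with hI
  have hItop : I ≠ ⊤ := by
    rw [hI, ← ofReal_integral_eq_lintegral_ofReal hki (Eventually.of_forall hk0)]
    exact ENNReal.ofReal_ne_top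
  refine ⟨I.toReal ^ 2 + 1, by positivity, fun u => ?_⟩
  set U : SchwartzMap (EuclideanSpace ℝ (Fin n)) ℂ := 𝓕 u with hU
  have hUe : ∀ ξ, 𝓕 (fun x => u x) ξ = U ξ := fun ξ => by rw [hU, fourier_coe]
  simp only [hsq, hUe]
  have hUm : Measurable fun ξ => ENNReal.ofReal (W ξ) * ENNReal.ofReal ‖U ξ‖ :=
    hWm.ennreal_ofReal.mul U.continuous.norm.measurable.ennreal_ofReal
  have hpt : ∀ ξ, ENNReal.ofReal (W ξ) * ENNReal.ofReal ‖𝓕 (fun x => χ x * u x) ξ‖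
      ≤ ∫⁻ η, ENNReal.ofReal (k (ξ - η)) * (ENNReal.ofReal (W η) * ENNReal.ofReal ‖U η‖) := by
    intro ξ
    rw [aux_conv]
    calc _ ≤ ENNReal.ofReal (W ξ) * ∫⁻ η, ENNReal.ofReal ‖X (ξ - η) * U η‖ := by
          gcongr
          simp only [ofReal_norm_eq_enorm]
          exact enorm_integral_le_lintegral_enorm _
      _ = ∫⁻ η, ENNReal.ofReal (W ξ) * ENNReal.ofReal ‖X (ξ - η) * U η‖ := by
          rw [lintegral_const_mul' _ _ ENNReal.ofReal_ne_top]
      _ ≤ _ := by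
          refine lintegral_mono fun η => ?_
          rw [← ENNReal.ofReal_mul (hW0 ξ), ← ENNReal.ofReal_mul (hW0 η),
            ← ENNReal.ofReal_mul (hk0 _)]
          apply ENNReal.ofReal_le_ofReal
          rw [norm_mul]
          calc W ξ * (‖X (ξ - η)‖ * ‖U η‖)
              ≤ (C * (1 + ‖ξ - η‖) ^ N * W η) * (‖X (ξ - η)‖ * ‖U η‖) := by
                gcongr
                exact hW ξ η
            _ = _ := by simp only [hk]; ring
  calc _ ≤ ∫⁻ ξ, (∫⁻ η, ENNReal.ofReal (k (ξ - η)) *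
        (ENNReal.ofReal (W η) * ENNReal.ofReal ‖U η‖)) ^ 2 :=
        lintegral_mono fun ξ => pow_le_pow_left' (hpt ξ) 2
    _ ≤ I ^ 2 * _ := aux_young (fun ξ => ENNReal.ofReal (k ξ)) _
        hkc.measurable.ennreal_ofReal hUm
    _ ≤ _ := by
      gcongr
      rw [← ENNReal.ofReal_toReal hItop, ← ENNReal.ofReal_pow ENNReal.toReal_nonneg]
      apply ENNReal.ofReal_le_ofReal
      rw [ENNReal.toReal_ofReal ENNReal.toReal_nonneg]
      linarith
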